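/- arXiv:1510.06700 — 2 statements merged into one kernel-verified Lean document; each statement's English description precedes it below -/
import Mathlib

section
/- Let s be a subset of the coordinates {1,…,n}, let c ∈ {0,1}, and let f : {0,1}^n → {0,1} be the affine function f(x) = (⊕_{i∈s} x_i) ⊕ c. Then two solutions a, b ∈ f⁻¹(1) are connected in the solution graph G(f) if and only if a_i = b_i for every i ∈ s (they differ only in fictive variables), and in that case d_f(a,b) = |a − b|, the Hamming distance. -/
/-- Coordinatewise majority operation on `Bool`. -/
def maj (x y z : Bool) : Bool := (x && y) || (y && z) || (z && x)

/-- One step in the solution graph of `R`: both endpoints are solutions and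
they differ in exactly one coordinate. -/
def stepR {ι : Type*} [Fintype ι] [DecidableEq ι] (R : Set (ι → Bool))
    (a b : ι → Bool) : Prop :=
  a ∈ R ∧ b ∈ R ∧ hammingDist a b = 1

/-- `a` and `b` are connected in the solution graph of `R`. -/
def connIn {ι : Type*} [Fintype ι] [DecidableEq ι] (R : Set (ι → Bool)) :
    (ι → Bool) → (ι → Bool) → Prop :=
  Relation.ReflTransGen (stepR R)

/-- There is a path of length `k` from `a` to `b` in the solution graph of `R`. -/
def hasPathLen {ι : Type*} [Fintype ι] [DecidableEq ι] (R : Set (ι → Bool)) :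
    ℕ → (ι → Bool) → (ι → Bool) → Prop
  | 0, a, b => a = b
  | k + 1, a, b => ∃ c, stepR R a c ∧ hasPathLen R k c b

/-- Shortest-path distance in the solution graph of `R`. -/
noncomputable def distIn {ι : Type*} [Fintype ι] [DecidableEq ι] (R : Set (ι → Bool))
    (a b : ι → Bool) : ℕ :=
  sInf {k | hasPathLen R k a b}

/-!
If the solution set is determined by the coordinates in `s`, then flipping a coordinate outside `s`
never leaves it, so two solutions that agree on `s` are joined by a path which corrects their
differing coordinates one at a time; such a path attains the Hamming distance, which bounds the
length of every path from below. Conversely, flipping a coordinate in `s` flips the parity, so no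
edge of the solution graph of an affine function changes a coordinate in `s`.
-/

open Finset Function

section HammingDist

variable {ι : Type*} [Fintype ι] [DecidableEq ι] {β : ι → Type*} [∀ i, DecidableEq (β i)]

theorem hammingDist_update_self {x : ∀ i, β i} {i : ι} {v : β i} (hv : x i ≠ v) :
    hammingDist x (update x i v) = 1 := by
  rw [hammingDist, card_eq_one]
  refine ⟨i, ?_⟩
  ext j
  obtain rfl | hj := eq_or_ne j i <;> simp [*]

theorem hammingDist_update_add_one {x y : ∀ i, β i} {i : ι} (hi : x i ≠ y i) :
    hammingDist (update x i (y i)) y + 1 = hammingDist x y := by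
  have hdiff : ({j | update x i (y i) j ≠ y j} : Finset ι) =
      ({j | x j ≠ y j} : Finset ι).erase i := by
    ext j
    obtain rfl | hj := eq_or_ne j i <;> simp [*]
  rw [hammingDist, hdiff, card_erase_add_one (by simpa using hi), hammingDist]

theorem exists_eq_update_of_hammingDist_eq_one {x y : ∀ i, β i} (h : hammingDist x y = 1) :
    ∃ i, x i ≠ y i ∧ y = update x i (y i) := by
  obtain ⟨i, hi⟩ : ∃ i, x i ≠ y i := ne_iff.mp (hammingDist_ne_zero.mp (by simp [h]))
  have hzero : hammingDist (update x i (y i)) y = 0 := by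
    have := hammingDist_update_add_one hi
    lia
  exact ⟨i, hi, (hammingDist_eq_zero.mp hzero).symm⟩

end HammingDist

section SolutionGraph

variable {ι : Type*} [Fintype ι] [DecidableEq ι] {R : Set (ι → Bool)} {a b : ι → Bool} {k : ℕ}

theorem stepR.exists_eq_update_not (h : stepR R a b) : ∃ i, b = update a i (!a i) := by
  obtain ⟨i, hi, hb⟩ := exists_eq_update_of_hammingDist_eq_one h.2.2
  exact ⟨i, by rwa [Bool.eq_not_of_ne hi.symm] at hb⟩

theorem hasPathLen.connIn (h : hasPathLen R k a b) : connIn R a b := by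
  induction k generalizing a with
  | zero => exact h ▸ .refl
  | succ k ih =>
    obtain ⟨c, hac, hcb⟩ := h
    exact .head hac (ih hcb)

theorem hasPathLen.hammingDist_le (h : hasPathLen R k a b) : hammingDist a b ≤ k := by
  induction k generalizing a with
  | zero => exact (hammingDist_eq_zero.mpr h).le
  | succ k ih =>
    obtain ⟨c, hac, hcb⟩ := h
    calc
      hammingDist a b ≤ hammingDist a c + hammingDist c b := hammingDist_triangle a c b
      _ ≤ 1 + k := add_le_add hac.2.2.le (ih hcb)
      _ = k + 1 := add_comm 1 k

theorem distIn_eq_hammingDist_of_hasPathLen (h : hasPathLen R (hammingDist a b) a b) :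
    distIn R a b = hammingDist a b :=
  le_antisymm (Nat.sInf_le h) (le_csInf ⟨_, h⟩ fun _ hk ↦ hasPathLen.hammingDist_le hk)

theorem hasPathLen_hammingDist_of_dependsOn {s : Set ι} (hR : DependsOn (· ∈ R) s) (ha : a ∈ R)
    (hab : ∀ i ∈ s, a i = b i) : hasPathLen R (hammingDist a b) a b := by
  induction hk : hammingDist a b generalizing a with
  | zero => exact hammingDist_eq_zero.mp hk
  | succ k ih =>
    obtain ⟨i, hi⟩ : ∃ i, a i ≠ b i := ne_iff.mp (hammingDist_ne_zero.mp (by simp [hk]))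
    have hac : ∀ j ∈ s, a j = update a i (b i) j := fun j hj ↦
      (update_of_ne (by rintro rfl; exact hi (hab j hj)) _ _).symm
    have hc : update a i (b i) ∈ R := (hR hac).mp ha
    have hdist : hammingDist (update a i (b i)) b = k := by
      have := hammingDist_update_add_one hi
      lia
    exact ⟨update a i (b i), ⟨ha, hc, hammingDist_update_self hi⟩,
      ih hc (fun j hj ↦ (hac j hj).symm.trans (hab j hj)) hdist⟩

theorem connIn.eq_of_update_not_notMem {s : Set ι}
    (hR : ∀ x ∈ R, ∀ i ∈ s, update x i (!x i) ∉ R) (h : connIn R a b) : ∀ i ∈ s, a i = b i := by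
  induction h with
  | refl => exact fun _ _ ↦ rfl
  | @tail x y _ hxy ih =>
    obtain ⟨j, rfl⟩ := hxy.exists_eq_update_not
    have hj : j ∉ s := fun hj ↦ hR x hxy.1 j hj hxy.2.1
    intro i hi
    rw [ih i hi, update_of_ne (by rintro rfl; exact hj hi)]

end SolutionGraph

section AffineFn

variable {ι : Type*}

/-- The affine Boolean function `x ↦ (⊕_{i ∈ s} x_i) ⊕ c`. The exclusive or over `s` is encoded as
the parity of the number of coordinates in `s` that are `true`. -/
def affineFn (s : Finset ι) (c : Bool) (x : ι → Bool) : Bool :=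
  xor (decide ((s.filter fun i ↦ x i = true).card % 2 = 1)) c

theorem dependsOn_affineFn (s : Finset ι) (c : Bool) : DependsOn (affineFn s c) s := by
  intro x y hxy
  have hfilter : s.filter (fun i ↦ x i = true) = s.filter (fun i ↦ y i = true) :=
    filter_congr fun i hi ↦ by rw [hxy i hi]
  rw [affineFn, affineFn, hfilter]

variable [DecidableEq ι] {s : Finset ι} {i : ι}

theorem card_filter_update_eq_true (x : ι → Bool) (v : Bool) (hi : i ∈ s) :
    (s.filter fun j ↦ update x i v j = true).card =
      v.toNat + ((s.erase i).filter fun j ↦ x j = true).card := by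
  have herase : (s.erase i).filter (fun j ↦ update x i v j = true) =
      (s.erase i).filter (fun j ↦ x j = true) :=
    filter_congr fun j hj ↦ by rw [update_of_ne (ne_of_mem_erase hj)]
  rw [← herase]
  nth_rw 1 [← insert_erase hi]
  cases v <;> simp [filter_insert, add_comm]

theorem affineFn_update_not (c : Bool) (x : ι → Bool) (hi : i ∈ s) :
    affineFn s c (update x i (!x i)) = !affineFn s c x := by
  have hcard := card_filter_update_eq_true x (x i) hi
  rw [update_eq_self] at hcard
  have hparity (v : Bool) (m : ℕ) : ((!v).toNat + m) % 2 = 1 ↔ ¬(v.toNat + m) % 2 = 1 := by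
    cases v <;> simp only [Bool.not_true, Bool.not_false, Bool.toNat_true, Bool.toNat_false] <;> lia
  rw [affineFn, affineFn, card_filter_update_eq_true x _ hi, hcard,
    decide_eq_decide.mpr (hparity _ _), decide_not, Bool.not_xor]

end AffineFn

theorem stmt12_general {ι : Type*} [Fintype ι] [DecidableEq ι] (s : Finset ι) (c : Bool)
    {a : ι → Bool} (ha : affineFn s c a = true) (b : ι → Bool) :
    (connIn {x | affineFn s c x = true} a b ↔ ∀ i ∈ s, a i = b i) ∧
      ((∀ i ∈ s, a i = b i) →
        distIn {x | affineFn s c x = true} a b = hammingDist a b) := by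
  have hdep : DependsOn (· ∈ {x | affineFn s c x = true}) s := fun _ _ hxy ↦
    congrArg (· = true) (dependsOn_affineFn s c hxy)
  have hflip : ∀ x ∈ {x | affineFn s c x = true}, ∀ i ∈ (s : Set ι),
      update x i (!x i) ∉ {x | affineFn s c x = true} := by
    intro x hx i hi
    rw [Set.mem_ofPred_eq] at hx ⊢
    rw [affineFn_update_not c x hi, hx]
    decide
  have hpath (hab : ∀ i ∈ s, a i = b i) :
      hasPathLen {x | affineFn s c x = true} (hammingDist a b) a b :=
    hasPathLen_hammingDist_of_dependsOn hdep ha hab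
  exact ⟨⟨connIn.eq_of_update_not_notMem hflip, fun hab ↦ (hpath hab).connIn⟩,
    fun hab ↦ distIn_eq_hammingDist_of_hasPathLen (hpath hab)⟩

/-- For the affine function `f(x) = (⊕_{i ∈ s} x_i) ⊕ c`, two solutions are
connected in the solution graph iff they agree on all coordinates in `s`
(they differ only in fictive variables), and in that case the shortest-path
distance equals the Hamming distance. -/
theorem stmt12 {n : ℕ} (s : Finset (Fin n)) (c : Bool)
    (f : (Fin n → Bool) → Bool)
    (hf : ∀ a, f a =
      xor (decide ((s.filter (fun i => a i = true)).card % 2 = 1)) c)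
    (a b : Fin n → Bool) (ha : f a = true) (hb : f b = true) :
    (connIn {x | f x = true} a b ↔ ∀ i ∈ s, a i = b i) ∧
      ((∀ i ∈ s, a i = b i) →
        distIn {x | f x = true} a b = hammingDist a b) := by
  obtain rfl : f = affineFn s c := funext hf
  exact stmt12_general s c ha b
end

section
/- Let k ≥ 2, let ψ : {0,1}^n → {0,1}, and define T₀, T : {0,1}^n × {0,1} × {0,1}^{k+1} → {0,1} by: T₀(x,y,z) = 1 iff (ψ(x) = 1 and y = 1 and z = (0,…,0)) or z has at least two coordinates equal to 1; and T(x,y,z) = 1 iff T₀(x,y,z) = 1 or (x = (1,…,1) and y = 1 and z = (1,0,…,0)). Then: (i) T is 0-separating of degree k: for any k vectors outside T⁻¹(1) there is a coordinate at which all k vectors are 0; (ii) for any solutions s, t of ψ, the solutions (s,1,(0,…,0)) and (t,1,(0,…,0)) of T₀ are connected in G(T₀) if and only if s and t are connected in G(ψ); (iii) if ψ(1,…,1) = 1, then G(T) is connected if and only if G(ψ) is connected. -/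
/-!
Forgetting `y` and `z` inverts `s ↦ (s, 1, 0)`. Extended by the value `(1, …, 1)` wherever `z ≠ 0`,
it sends every step of `G(T)` to a path of `G(ψ)`: a step from `z = 0` to `z ≠ 0` can only end in
the extra vector of `T`, whose neighbours with `z = 0` already have `x = (1, …, 1)`. Since
`T₀ ⊆ T`, connectivity of lifted solutions is therefore the same in `ψ`, in `T₀` and in `T`. The
solutions of `T` with `z ≠ 0` form an upper set, hence a connected one, and the extra vector is
adjacent to the lift of `(1, …, 1)`.
-/

section SolutionGraph

variable {ι : Type*} [Fintype ι] [DecidableEq ι] {R R' : Set (ι → Bool)} {a b : ι → Bool}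

theorem stepR_symm (h : stepR R a b) : stepR R b a :=
  ⟨h.2.1, h.1, hammingDist_comm a b ▸ h.2.2⟩

theorem connIn_symm (h : connIn R a b) : connIn R b a :=
  have : Std.Symm (stepR R) := ⟨fun _ _ => stepR_symm⟩
  Relation.ReflTransGen.stdSymm.symm _ _ h

theorem connIn_mono (hR : R ⊆ R') (h : connIn R a b) : connIn R' a b :=
  Relation.ReflTransGen.mono (fun _ _ h => ⟨hR h.1, hR h.2.1, h.2.2⟩) _ _ h

theorem connIn_of_hammingDist_le_one (ha : a ∈ R) (hb : b ∈ R) (h : hammingDist a b ≤ 1) :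
    connIn R a b := by
  rcases h.lt_or_eq with h | h
  · rw [hammingDist_lt_one.1 h]
    exact .refl
  · exact .single ⟨ha, hb, h⟩

theorem hammingDist_update_self_le_one {β : ι → Type*} [∀ i, DecidableEq (β i)] (f : ∀ i, β i)
    (i : ι) (c : β i) : hammingDist f (Function.update f i c) ≤ 1 := by
  have hsub : (Finset.univ.filter fun j => f j ≠ Function.update f i c j) ⊆ {i} := fun j hj => by
    by_contra hji
    simp_all
  exact Finset.card_le_card hsub

theorem connIn_of_le_of_ordConnected (hR : R.OrdConnected) (ha : a ∈ R) (hb : b ∈ R)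
    (hab : a ≤ b) : connIn R a b := by
  induction a using WellFoundedGT.induction with
  | ind a ih =>
    rcases hab.eq_or_lt with rfl | hlt
    · exact .refl
    · obtain ⟨i, hi⟩ := (Pi.lt_def.1 hlt).2
      have ha_lt : a < Function.update a i (b i) := lt_update_self_iff.2 hi
      have hle_b : Function.update a i (b i) ≤ b := update_le_iff.2 ⟨le_rfl, fun j _ => hab j⟩
      have hmem : Function.update a i (b i) ∈ R := hR.out ha hb ⟨ha_lt.le, hle_b⟩
      exact (connIn_of_hammingDist_le_one ha hmem (hammingDist_update_self_le_one a i _)).trans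
        (ih _ ha_lt hmem hle_b)

end SolutionGraph

theorem hammingDist_comp_inl_add_hammingDist_comp_inr {α β γ : Type*} [Fintype α] [Fintype β]
    [DecidableEq γ] (f g : α ⊕ β → γ) :
    hammingDist (f ∘ Sum.inl) (g ∘ Sum.inl) + hammingDist (f ∘ Sum.inr) (g ∘ Sum.inr) =
      hammingDist f g := by
  simp [hammingDist, Finset.card_filter]

theorem eq_sumElim_iff {α β γ : Type*} {f : α → γ} {c : Unit → γ} {g : β → γ}
    {v : α ⊕ Unit ⊕ β → γ} :
    v = Sum.elim f (Sum.elim c g) ↔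
      (∀ i, v (.inl i) = f i) ∧ v (.inr (.inl ())) = c () ∧ ∀ j, v (.inr (.inr j)) = g j := by
  simp [funext_iff, Unique.forall_iff]

section Weight

variable {κ : Type*} [Fintype κ]

/-- The Hamming weight of a Boolean vector; Mathlib's `hammingNorm` would need a `0 : Bool`. -/
def weight (z : κ → Bool) : ℕ := (Finset.univ.filter fun j => z j = true).card

theorem weight_eq_hammingDist_bot (z : κ → Bool) : weight z = hammingDist ⊥ z := by
  simp [weight, hammingDist]

theorem weight_strictMono : StrictMono (weight (κ := κ)) := by
  intro z z' h
  obtain ⟨hle, j, hj⟩ := Pi.lt_def.1 h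
  obtain ⟨hzj, hzj'⟩ := Bool.lt_iff.1 hj
  refine Finset.card_lt_card (Finset.ssubset_iff_of_subset ?_ |>.2 ⟨j, by simp [hzj, hzj']⟩)
  exact Finset.monotone_filter_right _ fun i _ => hle i

theorem weight_decide_eq [DecidableEq κ] (j₀ : κ) : weight (fun j => decide (j = j₀)) = 1 :=
  Finset.card_eq_one.2 ⟨j₀, by ext; simp⟩

theorem exists_forall_eq_false_of_weight_le_one {τ : Type*} [Fintype τ]
    (hcard : Fintype.card τ < Fintype.card κ) {z : τ → κ → Bool} (hz : ∀ t, weight (z t) ≤ 1) :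
    ∃ j, ∀ t, z t j = false := by
  by_contra! hcover
  choose f hf using hcover
  obtain ⟨i, j, hij, hfij⟩ := Fintype.exists_ne_map_eq_of_card_lt f hcard
  refine hij (Finset.card_le_one.1 (hz (f i)) i ?_ j ?_)
  · simpa using hf i
  · simpa [hfij] using hf j

end Weight

section Construction

variable {ι κ : Type*}

/-- The vector `(s, 1, (0, …, 0))`, the copy of a solution `s` of `ψ` in `T₀` and in `T`. -/
def liftSol (s : ι → Bool) : ι ⊕ Unit ⊕ κ → Bool := Sum.elim s (Sum.elim ⊤ ⊥)

/-- The block `x` of a vector `(x, y, z)`. -/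
def xPart (v : ι ⊕ Unit ⊕ κ → Bool) : ι → Bool := v ∘ Sum.inl

/-- The block `z` of a vector `(x, y, z)`. -/
def zPart (v : ι ⊕ Unit ⊕ κ → Bool) : κ → Bool := v ∘ Sum.inr ∘ Sum.inr

/-- The vector `((1, …, 1), 1, e)`, where `e` is the unit vector at `j₀`: the only solution
of `T` that is not a solution of `T₀`. -/
def apex [DecidableEq κ] (j₀ : κ) : ι ⊕ Unit ⊕ κ → Bool :=
  Sum.elim ⊤ (Sum.elim ⊤ fun j => decide (j = j₀))

/-- The relation `T₀`, where `S` is the set of solutions of `ψ`. -/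
def liftRel [Fintype κ] (S : Set (ι → Bool)) : Set (ι ⊕ Unit ⊕ κ → Bool) :=
  liftSol '' S ∪ {v | 2 ≤ weight (zPart v)}

/-- The relation `T`, where `S` is the set of solutions of `ψ`; the distinguished coordinate of
`z` may be any `j₀`. -/
def sepRel [Fintype κ] [DecidableEq κ] (S : Set (ι → Bool)) (j₀ : κ) :
    Set (ι ⊕ Unit ⊕ κ → Bool) :=
  insert (apex j₀) (liftRel S)

theorem hammingDist_liftSol [Fintype ι] [Fintype κ] (s t : ι → Bool) :
    hammingDist (liftSol s : ι ⊕ Unit ⊕ κ → Bool) (liftSol t) = hammingDist s t := by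
  rw [← hammingDist_comp_inl_add_hammingDist_comp_inr]
  exact congrArg (hammingDist s t + ·) (hammingDist_self _)

theorem hammingDist_xPart_add_hammingDist_zPart_le [Fintype ι] [Fintype κ]
    (a b : ι ⊕ Unit ⊕ κ → Bool) :
    hammingDist (xPart a) (xPart b) + hammingDist (zPart a) (zPart b) ≤ hammingDist a b := by
  rw [← hammingDist_comp_inl_add_hammingDist_comp_inr a b,
    ← hammingDist_comp_inl_add_hammingDist_comp_inr (a ∘ Sum.inr) (b ∘ Sum.inr)]
  exact Nat.add_le_add_left (Nat.le_add_left _ _) _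

variable [Fintype κ] {S : Set (ι → Bool)} {j₀ : κ}

theorem mem_liftRel_iff {v : ι ⊕ Unit ⊕ κ → Bool} :
    v ∈ liftRel S ↔
      (xPart v ∈ S ∧ v (.inr (.inl ())) = true ∧ ∀ j, zPart v j = false) ∨
        2 ≤ weight (zPart v) := by
  refine or_congr_left ⟨?_, fun ⟨hx, hyz⟩ => ?_⟩
  · rintro ⟨s, hs, rfl⟩
    exact ⟨hs, rfl, fun _ => rfl⟩
  · exact ⟨xPart v, hx, (eq_sumElim_iff.2 ⟨fun _ => rfl, hyz⟩).symm⟩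

theorem mem_sepRel_iff [DecidableEq κ] {v : ι ⊕ Unit ⊕ κ → Bool} :
    v ∈ sepRel S j₀ ↔
      v ∈ liftRel S ∨
        (∀ i, xPart v i = true) ∧ v (.inr (.inl ())) = true ∧ ∀ j, zPart v j = decide (j = j₀) :=
  or_comm.trans (or_congr_right eq_sumElim_iff)

theorem liftSol_mem_liftRel {s : ι → Bool} (hs : s ∈ S) :
    (liftSol s : ι ⊕ Unit ⊕ κ → Bool) ∈ liftRel S :=
  .inl ⟨s, hs, rfl⟩

variable [DecidableEq κ]

theorem liftRel_subset_sepRel : liftRel S ⊆ sepRel S j₀ :=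
  Set.subset_insert _ _

theorem exists_forall_eq_false_of_notMem_sepRel {τ : Type*} [Fintype τ]
    (hcard : Fintype.card τ < Fintype.card κ) {w : τ → ι ⊕ Unit ⊕ κ → Bool}
    (hw : ∀ t, w t ∉ sepRel S j₀) : ∃ i, ∀ t, w t i = false := by
  have hweight (t) : weight (zPart (w t)) ≤ 1 := by
    by_contra! h
    exact hw t (liftRel_subset_sepRel (.inr h))
  obtain ⟨j, hj⟩ := exists_forall_eq_false_of_weight_le_one hcard hweight
  exact ⟨.inr (.inr j), hj⟩

theorem xPart_mem_of_zPart_eq_bot {v : ι ⊕ Unit ⊕ κ → Bool} (hv : v ∈ sepRel S j₀)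
    (hz : zPart v = ⊥) : xPart v ∈ S := by
  rcases mem_sepRel_iff.1 hv with hv | ⟨-, -, hv⟩
  · rcases mem_liftRel_iff.1 hv with ⟨hx, -⟩ | hv
    · exact hx
    · simp [hz, weight_eq_hammingDist_bot] at hv
  · simpa [hz] using hv j₀

theorem eq_apex_of_weight_zPart_eq_one {v : ι ⊕ Unit ⊕ κ → Bool} (hv : v ∈ sepRel S j₀)
    (hz : weight (zPart v) = 1) : v = apex j₀ := by
  rcases hv with rfl | ⟨s, -, rfl⟩ | hv
  · rfl
  · have hz_bot : weight (zPart (liftSol s : ι ⊕ Unit ⊕ κ → Bool)) = 0 :=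
      (weight_eq_hammingDist_bot _).trans (hammingDist_self _)
    omega
  · exact absurd hz (Nat.ne_of_gt hv)

theorem isUpperSet_insert_apex (j₀ : κ) :
    IsUpperSet (insert (apex j₀) {v : ι ⊕ Unit ⊕ κ → Bool | 2 ≤ weight (zPart v)}) := by
  rintro v v' hle (rfl | hv)
  · have hzle : zPart (apex j₀ : ι ⊕ Unit ⊕ κ → Bool) ≤ zPart v' := fun j => hle (.inr (.inr j))
    rcases hzle.eq_or_lt with hz | hz
    · exact .inl (eq_sumElim_iff.2
        ⟨fun i => hle (.inl i) rfl, hle (.inr (.inl ())) rfl, fun j => (congrFun hz j).symm⟩)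
    · exact .inr ((weight_decide_eq j₀).symm.trans_lt (weight_strictMono hz))
  · exact .inr (le_trans hv (weight_strictMono.monotone fun j => hle (.inr (.inr j))))

/-- The left inverse of `liftSol` along which paths in `G(T)` project to paths in `G(ψ)`. The value
`⊤` where `z ≠ 0` is chosen so that steps through `apex` do not change the projection. -/
def retract (v : ι ⊕ Unit ⊕ κ → Bool) : ι → Bool := if zPart v = ⊥ then xPart v else ⊤

variable [Fintype ι] [DecidableEq ι]

theorem xPart_eq_top_of_stepR {a b : ι ⊕ Unit ⊕ κ → Bool} (h : stepR (sepRel S j₀) a b)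
    (ha : zPart a = ⊥) (hb : zPart b ≠ ⊥) : xPart a = ⊤ := by
  obtain ⟨-, hbT, hab⟩ := h
  have hdist := hammingDist_xPart_add_hammingDist_zPart_le a b
  have hz_pos : 0 < hammingDist (zPart a) (zPart b) := hammingDist_pos.2 (ha ▸ hb.symm)
  have hz : weight (zPart b) = 1 := by
    rw [weight_eq_hammingDist_bot, ← ha]
    omega
  have hx : xPart a = xPart b := hammingDist_eq_zero.1 (by omega)
  rw [hx, eq_apex_of_weight_zPart_eq_one hbT hz]
  rfl

theorem connIn_retract_of_stepR {a b : ι ⊕ Unit ⊕ κ → Bool} (h : stepR (sepRel S j₀) a b) :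
    connIn S (retract a) (retract b) := by
  by_cases ha : zPart a = ⊥ <;> by_cases hb : zPart b = ⊥ <;>
    simp only [retract, ha, hb, if_true, if_false]
  · refine connIn_of_hammingDist_le_one (xPart_mem_of_zPart_eq_bot h.1 ha)
      (xPart_mem_of_zPart_eq_bot h.2.1 hb) ?_
    exact (Nat.le_add_right _ _).trans
      ((hammingDist_xPart_add_hammingDist_zPart_le a b).trans_eq h.2.2)
  · rw [xPart_eq_top_of_stepR h ha hb]
    exact .refl
  · rw [xPart_eq_top_of_stepR (stepR_symm h) hb ha]
    exact .refl
  · exact .refl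

theorem connIn_of_connIn_sepRel_liftSol {s t : ι → Bool}
    (h : connIn (sepRel S j₀) (liftSol s) (liftSol t)) : connIn S s t := by
  have hretract (s : ι → Bool) : retract (liftSol s : ι ⊕ Unit ⊕ κ → Bool) = s := if_pos rfl
  rw [← hretract s, ← hretract t]
  exact Relation.ReflTransGen.lift' retract (fun _ _ => connIn_retract_of_stepR) _ _ h

theorem connIn_liftRel_liftSol {s t : ι → Bool} (h : connIn S s t) :
    connIn (liftRel S) (liftSol s : ι ⊕ Unit ⊕ κ → Bool) (liftSol t) :=
  Relation.ReflTransGen.lift liftSol (fun s t h => ⟨liftSol_mem_liftRel h.1,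
    liftSol_mem_liftRel h.2.1, (hammingDist_liftSol s t).trans h.2.2⟩) _ _ h

theorem connIn_sepRel_top_of_mem_insert_apex {v : ι ⊕ Unit ⊕ κ → Bool}
    (hv : v ∈ insert (apex j₀) {v | 2 ≤ weight (zPart v)}) : connIn (sepRel S j₀) v ⊤ :=
  connIn_mono (Set.insert_subset_insert Set.subset_union_right) <|
    connIn_of_le_of_ordConnected (isUpperSet_insert_apex j₀).ordConnected hv
      (isUpperSet_insert_apex j₀ le_top hv) le_top

theorem connIn_sepRel_liftSol_top_apex (h1 : ⊤ ∈ S) :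
    connIn (sepRel S j₀) (liftSol ⊤) (apex j₀) := by
  have hapex : (apex j₀ : ι ⊕ Unit ⊕ κ → Bool) =
      Function.update (liftSol ⊤) (.inr (.inr j₀)) true := by
    ext (i | i | j) <;> simp [apex, liftSol, Function.update_apply]
  refine connIn_of_hammingDist_le_one (liftRel_subset_sepRel (liftSol_mem_liftRel h1))
    (Set.mem_insert _ _) ?_
  rw [hapex]
  exact hammingDist_update_self_le_one _ _ _

theorem connIn_sepRel_top (h1 : ⊤ ∈ S) (hS : ∀ s ∈ S, connIn S s ⊤) {v : ι ⊕ Unit ⊕ κ → Bool}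
    (hv : v ∈ sepRel S j₀) : connIn (sepRel S j₀) v ⊤ := by
  rcases hv with hv | ⟨s, hs, rfl⟩ | hv
  · exact connIn_sepRel_top_of_mem_insert_apex (.inl hv)
  · exact (connIn_mono liftRel_subset_sepRel (connIn_liftRel_liftSol (hS s hs))).trans <|
      (connIn_sepRel_liftSol_top_apex h1).trans <|
        connIn_sepRel_top_of_mem_insert_apex (Set.mem_insert _ _)
  · exact connIn_sepRel_top_of_mem_insert_apex (.inr hv)

theorem stmt14_general {τ : Type*} [Fintype τ] (hcard : Fintype.card τ < Fintype.card κ)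
    (S : Set (ι → Bool)) (j₀ : κ) :
    (∀ w : τ → ι ⊕ Unit ⊕ κ → Bool, (∀ t, w t ∉ sepRel S j₀) → ∃ i, ∀ t, w t i = false) ∧
    (∀ s t, connIn (liftRel S) (liftSol s : ι ⊕ Unit ⊕ κ → Bool) (liftSol t) ↔ connIn S s t) ∧
    (⊤ ∈ S →
      ((∀ u ∈ sepRel S j₀, ∀ w ∈ sepRel S j₀, connIn (sepRel S j₀) u w) ↔
        ∀ s ∈ S, ∀ t ∈ S, connIn S s t)) := by
  refine ⟨fun w => exists_forall_eq_false_of_notMem_sepRel hcard,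
    fun s t => ⟨fun h => ?_, connIn_liftRel_liftSol⟩,
    fun h1 => ⟨fun h s hs t ht => ?_, fun h u hu w hw => ?_⟩⟩
  · exact connIn_of_connIn_sepRel_liftSol (j₀ := j₀) (connIn_mono liftRel_subset_sepRel h)
  · exact connIn_of_connIn_sepRel_liftSol (h _ (liftRel_subset_sepRel (liftSol_mem_liftRel hs))
      _ (liftRel_subset_sepRel (liftSol_mem_liftRel ht)))
  · have htop {v} := connIn_sepRel_top (j₀ := j₀) (v := v) h1 fun s hs => h s hs ⊤ h1
    exact (htop hu).trans (connIn_symm (htop hw))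

end Construction

/-- The transformation used for the clones `S₀₂ᵏ`: with coordinates indexed by
`Fin n ⊕ Unit ⊕ Fin (k+1)` (the `x`-variables, the variable `y`, and the
variables `z`), the relation `T` is 0-separating of degree `k`, `T₀` preserves
connectivity between the embedded solutions of `ψ`, and (when `ψ` is
1-reproducing) the solution graph of `T` is connected iff that of `ψ` is. -/
theorem stmt14 {n k : ℕ} (hk : 2 ≤ k) (ψ : (Fin n → Bool) → Bool)
    (T₀ T : Set ((Fin n ⊕ Unit ⊕ Fin (k + 1)) → Bool))
    (hT₀ : ∀ v, v ∈ T₀ ↔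
      ((ψ (fun i => v (Sum.inl i)) = true ∧ v (Sum.inr (Sum.inl ())) = true ∧
          ∀ j, v (Sum.inr (Sum.inr j)) = false) ∨
        2 ≤ (Finset.univ.filter
          (fun j : Fin (k + 1) => v (Sum.inr (Sum.inr j)) = true)).card))
    (hT : ∀ v, v ∈ T ↔ (v ∈ T₀ ∨
      ((∀ i, v (Sum.inl i) = true) ∧ v (Sum.inr (Sum.inl ())) = true ∧
        ∀ j : Fin (k + 1), v (Sum.inr (Sum.inr j)) = decide (j = 0)))) :
    (∀ w : Fin k → ((Fin n ⊕ Unit ⊕ Fin (k + 1)) → Bool),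
      (∀ t, w t ∉ T) → ∃ i, ∀ t, w t i = false) ∧
    (∀ s t, ψ s = true → ψ t = true →
      (connIn T₀ (Sum.elim s (Sum.elim (fun _ => true) (fun _ => false)))
          (Sum.elim t (Sum.elim (fun _ => true) (fun _ => false))) ↔
        connIn {x | ψ x = true} s t)) ∧
    (ψ (fun _ => true) = true →
      ((∀ u ∈ T, ∀ w ∈ T, connIn T u w) ↔
        (∀ s, ψ s = true → ∀ t, ψ t = true → connIn {x | ψ x = true} s t))) := by
  obtain rfl : T₀ = liftRel {x | ψ x = true} :=
    Set.ext fun v => (hT₀ v).trans (mem_liftRel_iff (S := {x | ψ x = true})).symm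
  obtain rfl : T = sepRel {x | ψ x = true} 0 := Set.ext fun v => (hT v).trans mem_sepRel_iff.symm
  obtain ⟨hsep, hlift, hconn⟩ := stmt14_general (τ := Fin k) (κ := Fin (k + 1)) (by simp)
    {x | ψ x = true} 0
  exact ⟨hsep, fun s t _ _ => hlift s t, hconn⟩
end
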